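/- Work in ℂ², with standard basis vectors e₀, e₁; for a rational x let Z^x denote the 2×2 diagonal matrix diag(1, exp(iπx)); let |+⟩ = (e₀ + e₁)/√2 and |+_i⟩ = (e₀ + i·e₁)/√2. Let b_1, …, b_m and v_1, …, v_m be elements of {0,1}, set x = Σ_{j=1}^m (v_j − b_j/2) and S = Σ_{j=1}^m b_j. Then: (a) if S is even, Z^x |+⟩ = Z^w |+⟩ where w = (v_1 XOR ⋯ XOR v_m) XOR ((S mod 4)/2) ∈ {0,1}; (b) if S is odd, Z^x |+⟩ = Z^{w'} |+_i⟩ where w' = (v_1 XOR ⋯ XOR v_m) XOR (((1 + (S mod 4))/2) mod 2) ∈ {0,1}. -/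

import Mathlib

open Matrix

/-- The single-qubit gate `Z^x = diag(1, exp(iπx))` for a rational exponent `x`. -/
noncomputable def Zpow (x : ℚ) : Matrix (Fin 2) (Fin 2) ℂ :=
  Matrix.diagonal ![1, Complex.exp (Real.pi * (x : ℂ) * Complex.I)]

/-- The state `|+⟩ = (e₀ + e₁)/√2`. -/
noncomputable def ketPlus : Fin 2 → ℂ := ![1 / (Real.sqrt 2 : ℂ), 1 / (Real.sqrt 2 : ℂ)]

/-- The state `|+_i⟩ = (e₀ + i e₁)/√2`. -/
noncomputable def ketPlusI : Fin 2 → ℂ :=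
  ![1 / (Real.sqrt 2 : ℂ), Complex.I / (Real.sqrt 2 : ℂ)]

theorem exp_shift (x y : ℚ) (n : ℤ) (h : x = y + 2 * n) :
    Complex.exp (Real.pi * (x : ℂ) * Complex.I) = Complex.exp (Real.pi * (y : ℂ) * Complex.I) := by
  rw [Complex.exp_eq_exp_iff_exists_int]
  refine ⟨n, ?_⟩
  rw [h]
  push_cast
  ring

theorem exp_shift_half (x y : ℚ) (n : ℤ) (h : x = y + 1 / 2 + 2 * n) :
    Complex.exp (Real.pi * (x : ℂ) * Complex.I) =
      Complex.exp (Real.pi * (y : ℂ) * Complex.I) * Complex.I := by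
  rw [exp_shift x (y + 1 / 2) n h]
  have e : (Real.pi : ℂ) * ((y + 1 / 2 : ℚ) : ℂ) * Complex.I =
      Real.pi * (y : ℂ) * Complex.I + Real.pi / 2 * Complex.I := by
    push_cast
    ring
  rw [e, Complex.exp_add, Complex.exp_pi_div_two_mul_I]

theorem sum_split (m : ℕ) (b v : Fin m → ℕ) :
    (∑ j, ((v j : ℚ) - (b j : ℚ) / 2)) = ((∑ j, v j : ℕ) : ℚ) - ((∑ j, b j : ℕ) : ℚ) / 2 := by
  rw [Finset.sum_sub_distrib, ← Finset.sum_div]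
  push_cast
  rfl

/-- State evolution in the noiseless prepare-and-measure protocol:
with `x = ∑_j (v_j - b_j/2)` and `S = ∑_j b_j`, the state `Z^x |+⟩` equals
`Z^w |+⟩` with `w = (⊕_j v_j) ⊕ ((S mod 4)/2)` when `S` is even, and
`Z^{w'} |+_i⟩` with `w' = (⊕_j v_j) ⊕ (((1 + S mod 4)/2) mod 2)` when `S` is odd. -/
theorem state_evolution (m : ℕ) (b v : Fin m → ℕ) (hb : ∀ j, b j ≤ 1) (hv : ∀ j, v j ≤ 1) :
    ((∑ j, b j) % 2 = 0 →
      (Zpow (∑ j, ((v j : ℚ) - (b j : ℚ) / 2))).mulVec ketPlus =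
        (Zpow ((((∑ j, v j) + ((∑ j, b j) % 4) / 2) % 2 : ℕ) : ℚ)).mulVec ketPlus) ∧
    ((∑ j, b j) % 2 = 1 →
      (Zpow (∑ j, ((v j : ℚ) - (b j : ℚ) / 2))).mulVec ketPlus =
        (Zpow ((((∑ j, v j) + ((1 + (∑ j, b j) % 4) / 2) % 2) % 2 : ℕ) : ℚ)).mulVec ketPlusI) := by
  rw [sum_split]
  generalize (∑ j, b j) = S
  generalize (∑ j, v j) = V
  constructor
  · intro hS
    obtain ⟨n, hn⟩ : ∃ n : ℤ, 2 * (V : ℤ) - S = 2 * ((V + (S % 4) / 2) % 2 : ℕ) + 4 * n :=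
      ⟨(2 * (V : ℤ) - S - 2 * ((V + (S % 4) / 2) % 2 : ℕ)) / 4, by omega⟩
    have hq : 2 * (V : ℚ) - S = 2 * ((V + (S % 4) / 2) % 2 : ℕ) + 4 * n := by
      generalize ((V + (S % 4) / 2) % 2 : ℕ) = w at hn ⊢
      have h2 := congrArg (fun z : ℤ => (z : ℚ)) hn
      push_cast at h2
      exact h2
    have he := exp_shift ((V : ℚ) - S / 2) ((V + (S % 4) / 2) % 2 : ℕ) n (by linarith)
    unfold Zpow
    rw [he]
  · intro hS
    obtain ⟨n, hn⟩ : ∃ n : ℤ,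
        2 * (V : ℤ) - S = 2 * ((V + ((1 + S % 4) / 2) % 2) % 2 : ℕ) + 1 + 4 * n :=
      ⟨(2 * (V : ℤ) - S - 1 - 2 * ((V + ((1 + S % 4) / 2) % 2) % 2 : ℕ)) / 4, by omega⟩
    have hq : 2 * (V : ℚ) - S = 2 * ((V + ((1 + S % 4) / 2) % 2) % 2 : ℕ) + 1 + 4 * n := by
      generalize ((V + ((1 + S % 4) / 2) % 2) % 2 : ℕ) = w at hn ⊢
      have h2 := congrArg (fun z : ℤ => (z : ℚ)) hn
      push_cast at h2
      exact h2
    have he := exp_shift_half ((V : ℚ) - S / 2) ((V + ((1 + S % 4) / 2) % 2) % 2 : ℕ) n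
      (by linarith)
    unfold Zpow
    rw [he]
    ext i
    rw [Matrix.mulVec_diagonal, Matrix.mulVec_diagonal]
    fin_cases i
    · simp [ketPlus, ketPlusI]
    · simp only [ketPlus, ketPlusI, Fin.mk_one, Matrix.cons_val_one, Matrix.cons_val_fin_one]
      ring
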